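/- Let Ω ⊆ ℝⁿ be an open convex set and let g : Ω → Matₙ(ℝ) be a smooth map such that g(x) is a symmetric matrix for every x ∈ Ω and the Codazzi condition ∂g_{jk}/∂xⁱ = ∂g_{ik}/∂x^j holds on Ω for all indices i, j, k. Then there exists a smooth function φ : Ω → ℝ such that ∂²φ/∂xⁱ∂x^j = g_{ij} on Ω, i.e., g is the Hessian of a global potential φ on Ω. -/

import Mathlib

open Real Matrix Filter

/-- The `i`-th partial derivative of `f : ℝⁿ → ℝ`. -/
noncomputable def pd {n : ℕ} (i : Fin n) (f : (Fin n → ℝ) → ℝ) (x : Fin n → ℝ) : ℝ :=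
  fderiv ℝ f x (Pi.single i 1)

theorem fderiv_apply_eq_sum_pd {n : ℕ} (f : (Fin n → ℝ) → ℝ) (x u : Fin n → ℝ) :
    fderiv ℝ f x u = ∑ i, u i * pd i f x := by
  conv_lhs => rw [← Finset.univ_sum_single u]
  rw [map_sum]
  refine Finset.sum_congr rfl fun i _ => ?_
  rw [pd, ← smul_eq_mul, ← map_smul, ← Pi.single_smul, smul_eq_mul, mul_one]

/-- **Poincaré lemma** for smooth `1`-forms on an open convex subset of `ℝⁿ`, in coordinates. -/
theorem exists_contDiffOn_pd_eq {n : ℕ} {Ω : Set (Fin n → ℝ)} (hΩ : IsOpen Ω)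
    (hconv : Convex ℝ Ω) {a : Fin n → (Fin n → ℝ) → ℝ}
    (ha : ∀ j, ContDiffOn ℝ (⊤ : ℕ∞) (a j) Ω)
    (hclosed : ∀ x ∈ Ω, ∀ i j, pd i (a j) x = pd j (a i) x) :
    ∃ f : (Fin n → ℝ) → ℝ, ContDiffOn ℝ (⊤ : ℕ∞) f Ω ∧ ∀ x ∈ Ω, ∀ i, pd i f x = a i x := by
  let ω : (Fin n → ℝ) → (Fin n → ℝ) →L[ℝ] ℝ := fun x =>
    ∑ j, a j x • ContinuousLinearMap.proj j
  have hω : ContDiffOn ℝ (⊤ : ℕ∞) ω Ω :=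
    ContDiffOn.sum fun j _ => (ha j).smul contDiffOn_const
  have hderiv : ∀ x ∈ Ω, ∀ u v, fderiv ℝ ω x u v = ∑ j, fderiv ℝ (a j) x u * v j := by
    intro x hx u v
    have hsum : HasFDerivAt ω (∑ j, (fderiv ℝ (a j) x).smulRight
        (ContinuousLinearMap.proj j : (Fin n → ℝ) →L[ℝ] ℝ)) x :=
      HasFDerivAt.fun_sum fun j _ =>
        (((ha j).differentiableOn (by simp)).differentiableAt
          (hΩ.mem_nhds hx)).hasFDerivAt.smul_const
            (ContinuousLinearMap.proj j : (Fin n → ℝ) →L[ℝ] ℝ)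
    simp [hsum.fderiv]
  obtain ⟨f, hf⟩ := hconv.exists_forall_hasFDerivAt_of_fderiv_symmetric hΩ
    (hω.differentiableOn (by simp)) (fun x hx u v => by
      simp only [hderiv x hx, fderiv_apply_eq_sum_pd, Finset.sum_mul]
      rw [Finset.sum_comm]
      refine Finset.sum_congr rfl fun i _ => Finset.sum_congr rfl fun j _ => ?_
      rw [hclosed x hx i j]
      ring)
  refine ⟨f, (contDiffOn_infty_iff_fderiv_of_isOpen hΩ).2
    ⟨fun x hx => (hf x hx).differentiableAt.differentiableWithinAt,
      hω.congr fun x hx => (hf x hx).fderiv⟩, fun x hx i => ?_⟩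
  simp [pd, (hf x hx).fderiv, ω, Pi.single_apply]

theorem stmt9 {n : ℕ} (Ω : Set (Fin n → ℝ)) (hΩ : IsOpen Ω) (hconv : Convex ℝ Ω)
    (g : (Fin n → ℝ) → Matrix (Fin n) (Fin n) ℝ)
    (hg : ∀ i j, ContDiffOn ℝ (⊤ : ℕ∞) (fun x => g x i j) Ω)
    (hsymm : ∀ x ∈ Ω, (g x).IsSymm)
    (hcodazzi : ∀ x ∈ Ω, ∀ i j k,
      pd i (fun y => g y j k) x = pd j (fun y => g y i k) x) :
    ∃ φ : (Fin n → ℝ) → ℝ, ContDiffOn ℝ (⊤ : ℕ∞) φ Ω ∧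
      ∀ x ∈ Ω, ∀ i j, pd i (fun y => pd j φ y) x = g x i j := by
  choose ψ hψ hψg using fun k => exists_contDiffOn_pd_eq hΩ hconv (fun j => hg j k)
    (fun x hx i j => hcodazzi x hx i j k)
  obtain ⟨φ, hφ, hφψ⟩ := exists_contDiffOn_pd_eq hΩ hconv hψ (fun x hx i j => by
    rw [hψg j x hx i, hψg i x hx j, (hsymm x hx).apply])
  refine ⟨φ, hφ, fun x hx i j => ?_⟩
  have heq : (fun y => pd j φ y) =ᶠ[nhds x] ψ j := by
    filter_upwards [hΩ.mem_nhds hx] with y hy using hφψ y hy j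
  rw [pd, heq.fderiv_eq]
  exact hψg j x hx i
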